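/- Fix q, t ∈ (0,1). Let A_{q,t} be the ℂ-algebra presented by two generators z, w subject to the single relation w·z = q²·z·w + (1 - q²)·1 + (t·(1 - q²)/(1 - t))·(1 - z·w)·(1 - w·z), realized as the quotient (RingQuot) of the free ℂ-algebra on two generators by this relation. Let T be the bounded operator on ℓ²(ℕ, ℂ) with T δ_m = √(λ_{m+1}) · δ_{m+1}, where λ_m = (1 - q^{2m})/(1 - t·q^{2m}). Then there exists a ℂ-algebra homomorphism π from A_{q,t} to the algebra of bounded operators on ℓ²(ℕ, ℂ) with π(z) = T and π(w) = T*; in particular π(w) is the adjoint of π(z). -/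

import Mathlib

/-- `ℓ²(ℕ, ℂ)`. -/
noncomputable abbrev QDisc.H : Type := lp (fun _ : ℕ => ℂ) 2

/-- The standard orthonormal basis vector `δ_m` of `ℓ²(ℕ, ℂ)`. -/
noncomputable def QDisc.δ (m : ℕ) : QDisc.H := lp.single 2 m (1 : ℂ)

/-- The generator `z` of the free algebra on two generators. -/
noncomputable def QDisc.z : FreeAlgebra ℂ (Fin 2) := FreeAlgebra.ι ℂ (0 : Fin 2)

/-- The generator `w` (playing the role of `z*`) of the free algebra on two generators. -/
noncomputable def QDisc.w : FreeAlgebra ℂ (Fin 2) := FreeAlgebra.ι ℂ (1 : Fin 2)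

/-- The two-parameter quantum disc relation (relation (3) of the paper):
`w z = q² z w + (1 - q²) 1 + (t(1-q²)/(1-t)) (1 - z w)(1 - w z)`. -/
def QDisc.relDisc (q t : ℝ) : FreeAlgebra ℂ (Fin 2) → FreeAlgebra ℂ (Fin 2) → Prop :=
  fun a b => a = QDisc.w * QDisc.z ∧
    b = ((q ^ 2 : ℝ) : ℂ) • (QDisc.z * QDisc.w) + ((1 - q ^ 2 : ℝ) : ℂ) • 1 +
      ((t * (1 - q ^ 2) / (1 - t) : ℝ) : ℂ) •
        ((1 - QDisc.z * QDisc.w) * (1 - QDisc.w * QDisc.z))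

/-!
For the weighted shift `T`, both `T* T` and `T T*` are diagonal in the basis `e`, with eigenvalues
`λ_{m+1}` and `λ_m` at `e_m`, so the relation between `T` and `T*` is a scalar recursion for `λ`.
Since `1 / (1 - λ_m) = (q ^ (-2 m) - t) / (1 - t)` is affine in `q ^ (-2 m)`, the quantity
`q ^ 2 / (1 - λ_{m+1}) - 1 / (1 - λ_m)` is the constant `t (1 - q ^ 2) / (1 - t)`; clearing
denominators turns this into the recursion.
-/

section WeightedShift

open scoped InnerProduct ComplexConjugate

variable {𝕜 E : Type*} [RCLike 𝕜] [NormedAddCommGroup E] [InnerProductSpace 𝕜 E]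

theorem eq_of_forall_inner_hilbertBasis_eq {ι : Type*} (e : HilbertBasis ι 𝕜 E) {x y : E}
    (h : ∀ i, inner 𝕜 (e i) x = inner 𝕜 (e i) y) : x = y := by
  refine e.repr.injective (lp.ext (funext fun i => ?_))
  rw [e.repr_apply_apply, e.repr_apply_apply, h i]

theorem continuousLinearMap_eq_of_eqOn_hilbertBasis {ι F : Type*} [AddCommMonoid F] [Module 𝕜 F]
    [TopologicalSpace F] [T2Space F] (e : HilbertBasis ι 𝕜 E) {A B : E →L[𝕜] F}
    (h : ∀ i, A (e i) = B (e i)) : A = B :=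
  ContinuousLinearMap.ext_on (Submodule.dense_iff_topologicalClosure_eq_top.2 e.dense_span)
    (Set.forall_mem_range.2 h)

/-- `T` is the weighted shift `e m ↦ a m • e (m + 1)` along the Hilbert basis `e`; the weight `a m`
is indexed by the source of the arrow. -/
def IsWeightedShift (e : HilbertBasis ℕ 𝕜 E) (a : ℕ → 𝕜) (T : E →L[𝕜] E) : Prop :=
  ∀ m, T (e m) = a m • e (m + 1)

namespace IsWeightedShift

variable [CompleteSpace E] {e : HilbertBasis ℕ 𝕜 E} {a : ℕ → 𝕜} {T : E →L[𝕜] E}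

theorem adjoint_apply_zero (hT : IsWeightedShift e a T) : (T†) (e 0) = 0 := by
  refine eq_of_forall_inner_hilbertBasis_eq e fun n => ?_
  rw [ContinuousLinearMap.adjoint_inner_right, hT, inner_smul_left,
    e.orthonormal.inner_eq_zero n.succ_ne_zero, mul_zero, inner_zero_right]

theorem adjoint_apply_succ (hT : IsWeightedShift e a T) (m : ℕ) :
    (T†) (e (m + 1)) = conj (a m) • e m := by
  refine eq_of_forall_inner_hilbertBasis_eq e fun n => ?_
  rw [ContinuousLinearMap.adjoint_inner_right, hT, inner_smul_left, inner_smul_right]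
  obtain rfl | hnm := eq_or_ne n m
  · simp only [inner_self_eq_norm_sq_to_K, e.orthonormal.norm_eq_one]
  · rw [e.orthonormal.inner_eq_zero hnm, e.orthonormal.inner_eq_zero (by simpa using hnm),
      mul_zero, mul_zero]

theorem adjoint_mul_self_apply (hT : IsWeightedShift e a T) (m : ℕ) :
    (T† * T) (e m) = (‖a m‖ ^ 2 : 𝕜) • e m := by
  rw [mul_apply_eq_comp, hT, map_smul, hT.adjoint_apply_succ, smul_smul, RCLike.mul_conj]

theorem self_mul_adjoint_apply_zero (hT : IsWeightedShift e a T) : (T * T†) (e 0) = 0 := by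
  rw [mul_apply_eq_comp, hT.adjoint_apply_zero, map_zero]

theorem self_mul_adjoint_apply_succ (hT : IsWeightedShift e a T) (m : ℕ) :
    (T * T†) (e (m + 1)) = (‖a m‖ ^ 2 : 𝕜) • e (m + 1) := by
  rw [mul_apply_eq_comp, hT.adjoint_apply_succ, map_smul, hT, smul_smul, RCLike.conj_mul]

theorem adjoint_mul_self_eq_of_recursion (hT : IsWeightedShift e a T) {c : ℕ → 𝕜} (h0 : c 0 = 0)
    (ha : ∀ m, (‖a m‖ ^ 2 : 𝕜) = c (m + 1)) {α β γ : 𝕜}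
    (hrec : ∀ m, c (m + 1) = α * c m + β + γ * ((1 - c m) * (1 - c (m + 1)))) :
    T† * T = α • (T * T†) + β • 1 + γ • ((1 - T * T†) * (1 - T† * T)) := by
  refine continuousLinearMap_eq_of_eqOn_hilbertBasis e fun m => ?_
  have hadj_mul : (T† * T) (e m) = c (m + 1) • e m := by
    rw [hT.adjoint_mul_self_apply, ha]
  have hmul_adj : (T * T†) (e m) = c m • e m := by
    cases m with
    | zero => rw [hT.self_mul_adjoint_apply_zero, h0, zero_smul]
    | succ m => rw [hT.self_mul_adjoint_apply_succ, ha]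
  have hprod : ((1 - T * T†) * (1 - T† * T)) (e m) = ((1 - c m) * (1 - c (m + 1))) • e m := by
    simp only [mul_apply_eq_comp (1 - T * T†), sub_apply, one_apply_eq_self, hadj_mul, hmul_adj,
      map_sub, map_smul]
    module
  calc (T† * T) (e m)
      = (α * c m + β + γ * ((1 - c m) * (1 - c (m + 1)))) • e m :=
        hadj_mul.trans (congrArg (· • e m) (hrec m))
    _ = (α • (T * T†) + β • 1 + γ • ((1 - T * T†) * (1 - T† * T))) (e m) := by
        simp only [add_apply, smul_apply, hprod, one_apply_eq_self, hmul_adj, smul_smul, add_smul]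

end IsWeightedShift

end WeightedShift

namespace QDisc

section Weight

variable {K : Type*} [Field K]

/-- The squared weight `λ_m = (1 - q ^ (2 m)) / (1 - t q ^ (2 m))` of the quantum disc shift. -/
def sqWeight (q t : K) (m : ℕ) : K := (1 - q ^ (2 * m)) / (1 - t * q ^ (2 * m))

theorem sqWeight_zero (q t : K) : sqWeight q t 0 = 0 := by
  simp [sqWeight]

theorem sqWeight_nonneg [LinearOrder K] [IsStrictOrderedRing K] {q t : K} {m : ℕ}
    (hq : q ^ (2 * m) ≤ 1) (htq : t * q ^ (2 * m) ≤ 1) : 0 ≤ sqWeight q t m :=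
  div_nonneg (sub_nonneg.2 hq) (sub_nonneg.2 htq)

theorem one_sub_sqWeight {q t : K} {m : ℕ} (h : t * q ^ (2 * m) ≠ 1) :
    1 - sqWeight q t m = (1 - t) * q ^ (2 * m) / (1 - t * q ^ (2 * m)) := by
  rw [sqWeight, one_sub_div (sub_ne_zero.2 h.symm)]
  ring

theorem sqWeight_succ {q t : K} (ht : t ≠ 1) {m : ℕ} (hm : t * q ^ (2 * m) ≠ 1)
    (hm' : t * q ^ (2 * (m + 1)) ≠ 1) :
    sqWeight q t (m + 1) = q ^ 2 * sqWeight q t m + (1 - q ^ 2) +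
      t * (1 - q ^ 2) / (1 - t) * ((1 - sqWeight q t m) * (1 - sqWeight q t (m + 1))) := by
  have hcompl : q ^ 2 * (1 - sqWeight q t m) - (1 - sqWeight q t (m + 1)) =
      t * (1 - q ^ 2) / (1 - t) * ((1 - sqWeight q t m) * (1 - sqWeight q t (m + 1))) := by
    rw [one_sub_sqWeight hm, one_sub_sqWeight hm']
    have h1t := sub_ne_zero.2 ht.symm
    have hden := sub_ne_zero.2 hm.symm
    have hden' := sub_ne_zero.2 hm'.symm
    field_simp
    ring
  linear_combination hcompl

end Weight

theorem exists_algHom_of_relation {A : Type*} [Ring A] [Algebra ℂ A] {q t : ℝ} {x y : A}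
    (h : y * x = ((q ^ 2 : ℝ) : ℂ) • (x * y) + ((1 - q ^ 2 : ℝ) : ℂ) • 1 +
      ((t * (1 - q ^ 2) / (1 - t) : ℝ) : ℂ) • ((1 - x * y) * (1 - y * x))) :
    ∃ φ : RingQuot (relDisc q t) →ₐ[ℂ] A,
      φ (RingQuot.mkAlgHom ℂ (relDisc q t) z) = x ∧
      φ (RingQuot.mkAlgHom ℂ (relDisc q t) w) = y := by
  refine ⟨RingQuot.liftAlgHom ℂ ⟨FreeAlgebra.lift ℂ ![x, y], ?_⟩, ?_, ?_⟩
  · rintro _ _ ⟨rfl, rfl⟩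
    simpa [z, w] using h
  · simp [z]
  · simp [w]

/-- The standard Hilbert basis `δ` of `ℓ²(ℕ, ℂ)`. -/
noncomputable def stdBasis : HilbertBasis ℕ ℂ H := .ofRepr (LinearIsometryEquiv.refl ℂ H)

theorem stdBasis_apply (m : ℕ) : stdBasis m = δ m :=
  (stdBasis.repr_symm_single m).symm

end QDisc

open QDisc in
theorem quantum_disc_algebra_representation_general {E : Type*} [NormedAddCommGroup E]
    [InnerProductSpace ℂ E] [CompleteSpace E] {e : HilbertBasis ℕ ℂ E} {a : ℕ → ℂ} {T : E →L[ℂ] E}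
    (hT : IsWeightedShift e a T) {q t : ℝ} (hqt : ∀ m : ℕ, t * q ^ (2 * m) ≠ 1)
    (ha : ∀ m, ‖a m‖ ^ 2 = sqWeight q t (m + 1)) :
    ∃ φ : RingQuot (relDisc q t) →ₐ[ℂ] (E →L[ℂ] E),
      φ (RingQuot.mkAlgHom ℂ (relDisc q t) z) = T ∧
      φ (RingQuot.mkAlgHom ℂ (relDisc q t) w) = ContinuousLinearMap.adjoint T := by
  have ht : t ≠ 1 := by simpa using hqt 0
  refine exists_algHom_of_relation
    (hT.adjoint_mul_self_eq_of_recursion (c := fun m => ((sqWeight q t m : ℝ) : ℂ))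
      ?_ (fun m => ?_) fun m => ?_)
  · exact_mod_cast sqWeight_zero q t
  · rw [← ha, Complex.ofReal_pow, RCLike.ofReal_eq_complex_ofReal]
  · exact_mod_cast sqWeight_succ ht (hqt m) (hqt (m + 1))

open QDisc in
/-- The weighted shift `T δ_m = √(λ_{m+1}) δ_{m+1}` and its adjoint define a
representation of the two-parameter quantum disc algebra
`A_{q,t} = ℂ⟨z, w⟩ / (wz = q² zw + (1-q²) + (t(1-q²)/(1-t))(1-zw)(1-wz))` on `ℓ²(ℕ, ℂ)`. -/
theorem quantum_disc_algebra_representation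
    (q t : ℝ) (hq0 : 0 < q) (hq1 : q < 1) (ht0 : 0 < t) (ht1 : t < 1)
    (lam : ℕ → ℝ)
    (hlam : ∀ m : ℕ, lam m = (1 - q ^ (2 * m)) / (1 - t * q ^ (2 * m)))
    (T : H →L[ℂ] H)
    (hT : ∀ m : ℕ, T (δ m) = (Real.sqrt (lam (m + 1)) : ℂ) • δ (m + 1)) :
    ∃ φ : RingQuot (relDisc q t) →ₐ[ℂ] (H →L[ℂ] H),
      φ (RingQuot.mkAlgHom ℂ (relDisc q t) z) = T ∧
      φ (RingQuot.mkAlgHom ℂ (relDisc q t) w) = ContinuousLinearMap.adjoint T := by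
  have hq (m : ℕ) : q ^ (2 * m) ≤ 1 := pow_le_one₀ hq0.le hq1.le
  have htq (m : ℕ) : t * q ^ (2 * m) < 1 :=
    mul_lt_one_of_nonneg_of_lt_one_left ht0.le ht1 (hq m)
  obtain rfl : lam = sqWeight q t := funext hlam
  refine quantum_disc_algebra_representation_general (e := stdBasis)
    (a := fun m => (√(sqWeight q t (m + 1)) : ℂ)) (fun m => ?_) (fun m => (htq m).ne) fun m => ?_
  · simpa only [stdBasis_apply] using hT m
  · rw [Complex.norm_real, Real.norm_eq_abs, sq_abs,
      Real.sq_sqrt (sqWeight_nonneg (hq _) (htq _).le)]
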